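/- arXiv:2302.10773 — 2 statements merged into one kernel-verified Lean document; each statement's English description precedes it below -/
import Mathlib

section
/- Let d, n ∈ ℕ, B, C, D, R ≥ 0 real, and f : ℝ^d → ℝ^n a three-times continuously differentiable map whose components satisfy |∂_{x_k} f_j(x)| ≤ B, |∂²_{x_k x_m} f_j(x)| ≤ C, and |∂³_{x_k x_m x_s} f_j(x)| ≤ D for all j < n, all k, m, s < d, and all x ∈ ℝ^d. Let a ∈ ℝ^n with |a_j| ≤ R for all j and b ∈ ℝ, and define g : ℝ^d → ℝ by g(x) = tanh(∑_{j<n} a_j f_j(x) + b). Then |∂³_{x_k x_m x_s} g(x)| ≤ 2·n³·R³·B³ + 3·n²·R²·B·C + n·R·D for all k, m, s < d and all x ∈ ℝ^d. -/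
/-- The partial derivative of `f : ℝ^d → ℝ` in the `k`-th coordinate direction. -/
noncomputable def pd {d : ℕ} (f : (Fin d → ℝ) → ℝ) (k : Fin d) : (Fin d → ℝ) → ℝ :=
  fun x => fderiv ℝ f x (Pi.single k 1)

/-!
By the chain and product rules, the third derivative of `φ ∘ u` along `v`, `w`, `z` is

  `φ'''(u) u_v u_w u_z + φ''(u) (u_vz u_w + u_v u_wz + u_vw u_z) + φ'(u) u_vwz`.

For `u = ∑ a_j f_j + b`, every derivative of `u` is at most `∑ |a_j|` times the corresponding bound
on the `f_j`. With `t = tanh s`, the first three derivatives of `tanh` at `s` are `1 - t ^ 2`,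
`-2 t (1 - t ^ 2)` and `(1 - t ^ 2) (6 t ^ 2 - 2)`, of absolute value at most `1`, `1` and `2`
since `t ^ 2 < 1`.
-/

open Filter Topology

section DirDeriv

variable {𝕜 E : Type*} [NontriviallyNormedField 𝕜] [NormedAddCommGroup E] [NormedSpace 𝕜 E]

/-- The directional derivative of a scalar function along `v`. The base point is the last argument
so that directional derivatives can be iterated; `pd u k` is the case `v = Pi.single k 1`. -/
noncomputable def dirDeriv (v : E) (u : E → 𝕜) : E → 𝕜 :=
  fun x => fderiv 𝕜 u x v

local notation "∂[" v "]" => dirDeriv v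

variable {u p : E → 𝕜} {φ : 𝕜 → 𝕜} {x : E}

theorem dirDeriv_congr_nhds (h : u =ᶠ[𝓝 x] p) (v : E) : ∂[v] u =ᶠ[𝓝 x] ∂[v] p :=
  h.fderiv.fun_comp fun L => L v

theorem contDiffAt_dirDeriv {m n : WithTop ℕ∞} (hu : ContDiffAt 𝕜 n u x) (hmn : m + 1 ≤ n)
    (v : E) : ContDiffAt 𝕜 m (∂[v] u) x :=
  (hu.fderiv_right hmn).clm_apply contDiffAt_const

theorem dirDeriv_add_const (u : E → 𝕜) (c : 𝕜) (v : E) :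
    ∂[v] (fun y => u y + c) = ∂[v] u := by
  funext x
  simp only [dirDeriv, fderiv_add_const]

theorem dirDeriv_add (hu : DifferentiableAt 𝕜 u x) (hp : DifferentiableAt 𝕜 p x) (v : E) :
    ∂[v] (fun y => u y + p y) x = ∂[v] u x + ∂[v] p x := by
  simp [dirDeriv, fderiv_fun_add hu hp]

theorem dirDeriv_mul (hu : DifferentiableAt 𝕜 u x) (hp : DifferentiableAt 𝕜 p x) (v : E) :
    ∂[v] (fun y => u y * p y) x = ∂[v] u x * p x + u x * ∂[v] p x := by
  simp [dirDeriv, fderiv_fun_mul hu hp, mul_comm, add_comm]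

theorem dirDeriv_comp (hφ : DifferentiableAt 𝕜 φ (u x)) (hu : DifferentiableAt 𝕜 u x) (v : E) :
    ∂[v] (fun y => φ (u y)) x = deriv φ (u x) * ∂[v] u x := by
  simp [dirDeriv, (hφ.hasDerivAt.comp_hasFDerivAt x hu.hasFDerivAt).fderiv, ← Function.comp_def]

theorem dirDeriv_comp_mul (hφ : DifferentiableAt 𝕜 φ (u x)) (hu : DifferentiableAt 𝕜 u x)
    (hp : DifferentiableAt 𝕜 p x) (v : E) :
    ∂[v] (fun y => φ (u y) * p y) x
      = deriv φ (u x) * (∂[v] u x * p x) + φ (u x) * ∂[v] p x := by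
  rw [dirDeriv_mul (hφ.fun_comp' x hu) hp, dirDeriv_comp hφ hu, mul_assoc]

theorem eventually_differentiableAt_of_contDiffAt {F : Type*} [NormedAddCommGroup F]
    [NormedSpace 𝕜 F] {g : E → F} (hg : ContDiffAt 𝕜 1 g x) :
    ∀ᶠ y in 𝓝 x, DifferentiableAt 𝕜 g y :=
  (hg.eventually (by simp)).mono fun _ hy => hy.differentiableAt_one

theorem dirDeriv_comp_eventuallyEq (hφ : ContDiffAt 𝕜 1 φ (u x)) (hu : ContDiffAt 𝕜 1 u x)
    (v : E) : ∂[v] (fun y => φ (u y)) =ᶠ[𝓝 x] fun y => deriv φ (u y) * ∂[v] u y := by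
  filter_upwards [hu.continuousAt.eventually (eventually_differentiableAt_of_contDiffAt hφ),
    eventually_differentiableAt_of_contDiffAt hu] with y hφy huy
  exact dirDeriv_comp hφy huy v

theorem dirDeriv_dirDeriv_comp_eventuallyEq (hφ : ContDiffAt 𝕜 2 φ (u x))
    (hu : ContDiffAt 𝕜 2 u x) (v w : E) :
    ∂[w] (∂[v] fun y => φ (u y)) =ᶠ[𝓝 x] fun y =>
      deriv (deriv φ) (u y) * (∂[w] u y * ∂[v] u y) + deriv φ (u y) * ∂[w] (∂[v] u) y := by
  have hu₁ : ContDiffAt 𝕜 1 u x := hu.of_le one_le_two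
  have hφ' : ContDiffAt 𝕜 1 (deriv φ) (u x) := hφ.derivWithin (by norm_num)
  have hu' : ContDiffAt 𝕜 1 (∂[v] u) x := contDiffAt_dirDeriv hu (by norm_num) v
  refine (dirDeriv_congr_nhds
    (dirDeriv_comp_eventuallyEq (hφ.of_le one_le_two) hu₁ v) w).trans ?_
  filter_upwards [hu.continuousAt.eventually (eventually_differentiableAt_of_contDiffAt hφ'),
    eventually_differentiableAt_of_contDiffAt hu₁,
    eventually_differentiableAt_of_contDiffAt hu'] with y hφy huy hvy
  exact dirDeriv_comp_mul hφy huy hvy w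

theorem dirDeriv_dirDeriv_dirDeriv_comp (hφ : ContDiffAt 𝕜 3 φ (u x)) (hu : ContDiffAt 𝕜 3 u x)
    (v w z : E) :
    ∂[z] (∂[w] (∂[v] fun y => φ (u y))) x =
      deriv (deriv (deriv φ)) (u x) * (∂[v] u x * ∂[w] u x * ∂[z] u x)
        + deriv (deriv φ) (u x) * (∂[z] (∂[v] u) x * ∂[w] u x + ∂[v] u x * ∂[z] (∂[w] u) x
          + ∂[w] (∂[v] u) x * ∂[z] u x)
        + deriv φ (u x) * ∂[z] (∂[w] (∂[v] u)) x := by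
  have hφ₁ : ContDiffAt 𝕜 2 (deriv φ) (u x) := hφ.derivWithin (by norm_num)
  have hφ₂ : ContDiffAt 𝕜 1 (deriv (deriv φ)) (u x) := hφ₁.derivWithin (by norm_num)
  have hu₁ (v : E) : ContDiffAt 𝕜 2 (∂[v] u) x := contDiffAt_dirDeriv hu (by norm_num) v
  have hu₂ : ContDiffAt 𝕜 1 (∂[w] (∂[v] u)) x := contDiffAt_dirDeriv (hu₁ v) (by norm_num) w
  have dφ₁ : DifferentiableAt 𝕜 (deriv φ) (u x) := hφ₁.differentiableAt two_ne_zero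
  have dφ₂ : DifferentiableAt 𝕜 (deriv (deriv φ)) (u x) := hφ₂.differentiableAt_one
  have du : DifferentiableAt 𝕜 u x := hu.differentiableAt three_ne_zero
  have du₁ (v : E) : DifferentiableAt 𝕜 (∂[v] u) x := (hu₁ v).differentiableAt two_ne_zero
  have du₂ : DifferentiableAt 𝕜 (∂[w] (∂[v] u)) x := hu₂.differentiableAt_one
  have dp : DifferentiableAt 𝕜 (fun y => ∂[w] u y * ∂[v] u y) x := (du₁ w).fun_mul (du₁ v)
  have hsecond := dirDeriv_dirDeriv_comp_eventuallyEq (hφ.of_le (by norm_num))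
    (hu.of_le (by norm_num)) v w
  rw [(dirDeriv_congr_nhds hsecond z).eq_of_nhds,
    dirDeriv_add ((dφ₂.fun_comp' x du).fun_mul dp) ((dφ₁.fun_comp' x du).fun_mul du₂),
    dirDeriv_comp_mul dφ₂ du dp, dirDeriv_comp_mul dφ₁ du du₂, dirDeriv_mul (du₁ w) (du₁ v)]
  ring

theorem norm_dirDeriv_dirDeriv_dirDeriv_comp_le {κ : Type*} {e : κ → E}
    {M₁ M₂ M₃ P Q T : ℝ} (hφ : ContDiffAt 𝕜 3 φ (u x)) (hu : ContDiffAt 𝕜 3 u x)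
    (hM₁ : ‖deriv φ (u x)‖ ≤ M₁) (hM₂ : ‖deriv (deriv φ) (u x)‖ ≤ M₂)
    (hM₃ : ‖deriv (deriv (deriv φ)) (u x)‖ ≤ M₃) (hP : ∀ k, ‖∂[e k] u x‖ ≤ P)
    (hQ : ∀ k m, ‖∂[e m] (∂[e k] u) x‖ ≤ Q)
    (hT : ∀ k m s, ‖∂[e s] (∂[e m] (∂[e k] u)) x‖ ≤ T) (k m s : κ) :
    ‖∂[e s] (∂[e m] (∂[e k] fun y => φ (u y))) x‖
      ≤ M₃ * P ^ 3 + 3 * M₂ * P * Q + M₁ * T := by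
  have cubic : ‖∂[e k] u x * ∂[e m] u x * ∂[e s] u x‖ ≤ P * P * P :=
    norm_mul_le_of_le (norm_mul_le_of_le (hP k) (hP m)) (hP s)
  have mixed : ‖∂[e s] (∂[e k] u) x * ∂[e m] u x + ∂[e k] u x * ∂[e s] (∂[e m] u) x
      + ∂[e m] (∂[e k] u) x * ∂[e s] u x‖ ≤ Q * P + P * Q + Q * P :=
    norm_add_le_of_le
      (norm_add_le_of_le (norm_mul_le_of_le (hQ k s) (hP m)) (norm_mul_le_of_le (hP k) (hQ m s)))
      (norm_mul_le_of_le (hQ k m) (hP s))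
  calc ‖∂[e s] (∂[e m] (∂[e k] fun y => φ (u y))) x‖
      ≤ M₃ * (P * P * P) + M₂ * (Q * P + P * Q + Q * P) + M₁ * T := by
        rw [dirDeriv_dirDeriv_dirDeriv_comp hφ hu]
        exact norm_add_le_of_le
          (norm_add_le_of_le (norm_mul_le_of_le hM₃ cubic) (norm_mul_le_of_le hM₂ mixed))
          (norm_mul_le_of_le hM₁ (hT k m s))
    _ = M₃ * P ^ 3 + 3 * M₂ * P * Q + M₁ * T := by ring

variable {ι : Type*} [Fintype ι] {f : ι → E → 𝕜}

theorem dirDeriv_sum_mul_eventuallyEq (hf : ∀ j, ContDiffAt 𝕜 1 (f j) x) (a : ι → 𝕜) (v : E) :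
    ∂[v] (fun y => ∑ j, a j * f j y) =ᶠ[𝓝 x] fun y => ∑ j, a j * ∂[v] (f j) y := by
  filter_upwards [eventually_all.2 fun j => eventually_differentiableAt_of_contDiffAt (hf j)]
    with y hy
  simp [dirDeriv, fderiv_fun_sum fun j _ => (hy j).const_mul (a j), fderiv_const_mul (hy _)]

theorem dirDeriv_dirDeriv_sum_mul_eventuallyEq (hf : ∀ j, ContDiffAt 𝕜 2 (f j) x) (a : ι → 𝕜)
    (v w : E) :
    ∂[w] (∂[v] fun y => ∑ j, a j * f j y) =ᶠ[𝓝 x] fun y => ∑ j, a j * ∂[w] (∂[v] (f j)) y :=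
  (dirDeriv_congr_nhds
    (dirDeriv_sum_mul_eventuallyEq (fun j => (hf j).of_le one_le_two) a v) w).trans
    (dirDeriv_sum_mul_eventuallyEq (fun j => contDiffAt_dirDeriv (hf j) (by norm_num) v) a w)

theorem dirDeriv_dirDeriv_dirDeriv_sum_mul (hf : ∀ j, ContDiffAt 𝕜 3 (f j) x) (a : ι → 𝕜)
    (v w z : E) :
    ∂[z] (∂[w] (∂[v] fun y => ∑ j, a j * f j y)) x
      = ∑ j, a j * ∂[z] (∂[w] (∂[v] (f j))) x :=
  ((dirDeriv_congr_nhds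
    (dirDeriv_dirDeriv_sum_mul_eventuallyEq (fun j => (hf j).of_le (by norm_num)) a v w) z).trans
    (dirDeriv_sum_mul_eventuallyEq (fun j => contDiffAt_dirDeriv
      (contDiffAt_dirDeriv (m := 2) (hf j) (by norm_num) v) (by norm_num) w) a z)).eq_of_nhds

theorem norm_sum_mul_le {a c : ι → 𝕜} {S K : ℝ} (ha : ∑ j, ‖a j‖ ≤ S) (hK : 0 ≤ K)
    (hc : ∀ j, ‖c j‖ ≤ K) : ‖∑ j, a j * c j‖ ≤ S * K :=
  calc ‖∑ j, a j * c j‖ ≤ ∑ j, ‖a j‖ * K :=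
        norm_sum_le_of_le _ fun j _ => norm_mul_le_of_le le_rfl (hc j)
    _ = (∑ j, ‖a j‖) * K := (Finset.sum_mul ..).symm
    _ ≤ S * K := by gcongr

theorem tanh_layer_third_deriv_bound_general {κ : Type*} {e : κ → E} {a : ι → 𝕜} {b : 𝕜}
    {B C D S M₁ M₂ M₃ : ℝ} (hB : 0 ≤ B) (hC : 0 ≤ C) (hD : 0 ≤ D)
    (hφ : ContDiffAt 𝕜 3 φ (∑ j, a j * f j x + b))
    (hM₁ : ‖deriv φ (∑ j, a j * f j x + b)‖ ≤ M₁)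
    (hM₂ : ‖deriv (deriv φ) (∑ j, a j * f j x + b)‖ ≤ M₂)
    (hM₃ : ‖deriv (deriv (deriv φ)) (∑ j, a j * f j x + b)‖ ≤ M₃)
    (hf : ∀ j, ContDiffAt 𝕜 3 (f j) x) (hfB : ∀ j k, ‖∂[e k] (f j) x‖ ≤ B)
    (hfC : ∀ j k m, ‖∂[e m] (∂[e k] (f j)) x‖ ≤ C)
    (hfD : ∀ j k m s, ‖∂[e s] (∂[e m] (∂[e k] (f j))) x‖ ≤ D)
    (ha : ∑ j, ‖a j‖ ≤ S) (k m s : κ) :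
    ‖∂[e s] (∂[e m] (∂[e k] fun y => φ (∑ j, a j * f j y + b))) x‖
      ≤ M₃ * (S * B) ^ 3 + 3 * M₂ * (S * B) * (S * C) + M₁ * (S * D) := by
  have hu : ContDiffAt 𝕜 3 (fun y => ∑ j, a j * f j y + b) x :=
    (ContDiffAt.sum fun j _ => contDiffAt_const.mul (hf j)).add contDiffAt_const
  refine norm_dirDeriv_dirDeriv_dirDeriv_comp_le (u := fun y => ∑ j, a j * f j y + b) hφ hu hM₁
    hM₂ hM₃ (fun k => ?_) (fun k m => ?_) (fun k m s => ?_) k m s <;> rw [dirDeriv_add_const]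
  · rw [(dirDeriv_sum_mul_eventuallyEq (fun j => (hf j).of_le (by norm_num)) a _).eq_of_nhds]
    exact norm_sum_mul_le ha hB (hfB · k)
  · rw [(dirDeriv_dirDeriv_sum_mul_eventuallyEq
      (fun j => (hf j).of_le (by norm_num)) a _ _).eq_of_nhds]
    exact norm_sum_mul_le ha hC (hfC · k m)
  · rw [dirDeriv_dirDeriv_dirDeriv_sum_mul hf]
    exact norm_sum_mul_le ha hD (hfD · k m s)

end DirDeriv

theorem contDiff_real_tanh {n : WithTop ℕ∞} : ContDiff ℝ n Real.tanh := by
  rw [funext Real.tanh_eq_sinh_div_cosh]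
  exact Real.contDiff_sinh.div Real.contDiff_cosh fun x => (Real.cosh_pos x).ne'

theorem hasDerivAt_real_tanh (x : ℝ) : HasDerivAt Real.tanh (1 - Real.tanh x ^ 2) x := by
  have hcosh : Real.cosh x ≠ 0 := (Real.cosh_pos x).ne'
  have hquot := (Real.hasDerivAt_sinh x).fun_div (Real.hasDerivAt_cosh x) hcosh
  rw [← funext Real.tanh_eq_sinh_div_cosh] at hquot
  refine hquot.congr_deriv ?_
  rw [Real.tanh_eq_sinh_div_cosh]
  field_simp

theorem deriv_real_tanh : deriv Real.tanh = fun x => 1 - Real.tanh x ^ 2 :=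
  funext fun x => (hasDerivAt_real_tanh x).deriv

theorem deriv_deriv_real_tanh :
    deriv (deriv Real.tanh) = fun x => -2 * Real.tanh x * (1 - Real.tanh x ^ 2) := by
  funext x
  rw [deriv_real_tanh, (((hasDerivAt_real_tanh x).fun_pow 2).const_sub 1).deriv]
  ring

theorem deriv_deriv_deriv_real_tanh :
    deriv (deriv (deriv Real.tanh)) =
      fun x => (1 - Real.tanh x ^ 2) * (6 * Real.tanh x ^ 2 - 2) := by
  funext x
  have htanh := hasDerivAt_real_tanh x
  rw [deriv_deriv_real_tanh,
    ((htanh.const_mul (-2)).fun_mul ((htanh.fun_pow 2).const_sub 1)).deriv]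
  ring

theorem abs_deriv_real_tanh_le_one (x : ℝ) : |deriv Real.tanh x| ≤ 1 := by
  rw [deriv_real_tanh, abs_le]
  constructor <;> linarith [sq_nonneg (Real.tanh x), Real.tanh_sq_lt_one x]

theorem abs_deriv_deriv_real_tanh_le_one (x : ℝ) : |deriv (deriv Real.tanh) x| ≤ 1 := by
  have hnonneg : 0 ≤ 1 - Real.tanh x ^ 2 := by linarith [Real.tanh_sq_lt_one x]
  have two_mul_abs_le : 2 * |Real.tanh x| ≤ 1 + Real.tanh x ^ 2 := by
    linarith [sq_nonneg (1 - |Real.tanh x|), sq_abs (Real.tanh x)]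
  calc |deriv (deriv Real.tanh) x|
      = 2 * |Real.tanh x| * (1 - Real.tanh x ^ 2) := by
        simp only [deriv_deriv_real_tanh, abs_mul, abs_neg, abs_two, abs_of_nonneg hnonneg]
    _ ≤ (1 + Real.tanh x ^ 2) * (1 - Real.tanh x ^ 2) := by gcongr
    _ = 1 - (Real.tanh x ^ 2) ^ 2 := by ring
    _ ≤ 1 := sub_le_self _ (sq_nonneg _)

theorem abs_deriv_deriv_deriv_real_tanh_le_two (x : ℝ) :
    |deriv (deriv (deriv Real.tanh)) x| ≤ 2 := by
  have hlower : 0 ≤ Real.tanh x ^ 2 * (8 - 6 * Real.tanh x ^ 2) :=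
    mul_nonneg (sq_nonneg _) (by linarith [Real.tanh_sq_lt_one x])
  have hupper : 0 ≤ (3 * Real.tanh x ^ 2 - 2) ^ 2 := sq_nonneg _
  rw [deriv_deriv_deriv_real_tanh, abs_le]
  constructor <;> linarith

theorem tanh_layer_third_deriv_bound (d n : ℕ) (B C D R : ℝ)
    (hB : 0 ≤ B) (hC : 0 ≤ C) (hD : 0 ≤ D) (hR : 0 ≤ R)
    (f : (Fin d → ℝ) → Fin n → ℝ) (hf : ContDiff ℝ 3 f)
    (hfd : ∀ (j : Fin n) (k : Fin d) (x : Fin d → ℝ), |pd (fun y => f y j) k x| ≤ B)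
    (hfd2 : ∀ (j : Fin n) (k m : Fin d) (x : Fin d → ℝ),
      |pd (pd (fun y => f y j) k) m x| ≤ C)
    (hfd3 : ∀ (j : Fin n) (k m s : Fin d) (x : Fin d → ℝ),
      |pd (pd (pd (fun y => f y j) k) m) s x| ≤ D)
    (a : Fin n → ℝ) (ha : ∀ j, |a j| ≤ R) (b : ℝ) :
    ∀ (k m s : Fin d) (x : Fin d → ℝ),
      |pd (pd (pd (fun y : Fin d → ℝ => Real.tanh (∑ j, a j * f y j + b)) k) m) s x| ≤
        2 * (n : ℝ) ^ 3 * R ^ 3 * B ^ 3 + 3 * (n : ℝ) ^ 2 * R ^ 2 * B * C + n * R * D := by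
  intro k m s x
  have ha_sum : ∑ j, |a j| ≤ n * R := by
    simpa using Finset.sum_le_card_nsmul Finset.univ (fun j => |a j|) R fun j _ => ha j
  calc _ ≤ 2 * (n * R * B) ^ 3 + 3 * 1 * (n * R * B) * (n * R * C) + 1 * (n * R * D) :=
        tanh_layer_third_deriv_bound_general (e := fun k => Pi.single k 1) hB hC hD
          contDiff_real_tanh.contDiffAt (abs_deriv_real_tanh_le_one _)
          (abs_deriv_deriv_real_tanh_le_one _) (abs_deriv_deriv_deriv_real_tanh_le_two _)
          (fun j => (contDiff_pi.1 hf j).contDiffAt) (hfd · · x) (hfd2 · · · x)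
          (hfd3 · · · · x) ha_sum k m s
    _ = _ := by ring
end

section
/- Consider a tanh network of width W and weight bound R on ℝ^d. Then for every layer index ℓ ≥ 1, every component index i < W, every coordinate k < d, and every x ∈ ℝ^d, the first-order partial derivative satisfies |∂_{x_k} v^{(ℓ)}_i(x)| ≤ R^ℓ · W^{ℓ−1}. -/
/-!
A layer whose activation has slope at most `L` and whose weights are at most `R` maps a tangent
vector `w` to one whose entries are at most `L * R * ‖w‖₁`. By the chain rule the first layer
contributes `L * R * ‖u‖₁`, and each further layer multiplies the bound by `L * R * W`, since the
`ℓ¹` norm of the `W` entries it receives is at most `W` times their common bound.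
-/

theorem hasDerivAt_tanh (t : ℝ) : HasDerivAt Real.tanh (1 - Real.tanh t ^ 2) t := by
  have hcosh : Real.cosh t ≠ 0 := (Real.cosh_pos t).ne'
  have hquot := (Real.hasDerivAt_sinh t).fun_div (Real.hasDerivAt_cosh t) hcosh
  simp only [← Real.tanh_eq_sinh_div_cosh] at hquot
  refine hquot.congr_deriv ?_
  rw [Real.tanh_eq_sinh_div_cosh]
  field_simp

theorem differentiable_tanh : Differentiable ℝ Real.tanh :=
  fun t => (hasDerivAt_tanh t).differentiableAt

theorem abs_deriv_tanh_le_one (t : ℝ) : |deriv Real.tanh t| ≤ 1 := by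
  rw [(hasDerivAt_tanh t).deriv, abs_le]
  constructor <;> linarith [Real.tanh_sq_lt_one t, sq_nonneg (Real.tanh t)]

section Layer

variable {κ ι : Type*} [Fintype κ]

/-- One fully connected layer `z ↦ σ (A z + b)` of a neural network, with the activation `σ`
applied to each entry. -/
def layer (σ : ℝ → ℝ) (A : ι → κ → ℝ) (b : ι → ℝ) (z : κ → ℝ) : ι → ℝ :=
  fun i => σ (∑ j, A i j * z j + b i)

variable {σ : ℝ → ℝ}

theorem hasFDerivAt_layer (hσ : Differentiable ℝ σ) (A : ι → κ → ℝ) (b : ι → ℝ) (z : κ → ℝ) :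
    HasFDerivAt (layer σ A b)
      (ContinuousLinearMap.pi fun i => deriv σ (∑ j, A i j * z j + b i) •
        ∑ j, A i j • ContinuousLinearMap.proj (R := ℝ) (φ := fun _ : κ => ℝ) j) z := by
  refine hasFDerivAt_pi.2 fun i => ?_
  have haffine : HasFDerivAt (fun y : κ → ℝ => ∑ j, A i j * y j + b i)
      (∑ j, A i j • ContinuousLinearMap.proj (R := ℝ) (φ := fun _ : κ => ℝ) j) z :=
    (HasFDerivAt.fun_sum fun j _ => (hasFDerivAt_apply j z).const_mul (A i j)).add_const (b i)
  exact (hσ _).hasDerivAt.comp_hasFDerivAt z haffine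

theorem differentiable_layer (hσ : Differentiable ℝ σ) (A : ι → κ → ℝ) (b : ι → ℝ) :
    Differentiable ℝ (layer σ A b) :=
  fun z => (hasFDerivAt_layer hσ A b z).differentiableAt

theorem fderiv_layer_apply (hσ : Differentiable ℝ σ) (A : ι → κ → ℝ) (b : ι → ℝ)
    (z w : κ → ℝ) (i : ι) :
    fderiv ℝ (layer σ A b) z w i = deriv σ (∑ j, A i j * z j + b i) * ∑ j, A i j * w j := by
  simp [(hasFDerivAt_layer hσ A b z).fderiv]

theorem abs_fderiv_layer_apply_le {L R : ℝ} (hσ : Differentiable ℝ σ)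
    (hL : ∀ t, |deriv σ t| ≤ L) {A : ι → κ → ℝ} (hA : ∀ i j, |A i j| ≤ R) (b : ι → ℝ)
    (z w : κ → ℝ) (i : ι) :
    |fderiv ℝ (layer σ A b) z w i| ≤ L * R * ∑ j, |w j| := by
  have hL₀ : 0 ≤ L := (abs_nonneg _).trans (hL 0)
  have hsum : |∑ j, A i j * w j| ≤ R * ∑ j, |w j| :=
    calc |∑ j, A i j * w j| ≤ ∑ j, |A i j * w j| := Finset.abs_sum_le_sum_abs _ _
      _ = ∑ j, |A i j| * |w j| := by simp only [abs_mul]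
      _ ≤ ∑ j, R * |w j| := by gcongr with j; exact hA i j
      _ = R * ∑ j, |w j| := (Finset.mul_sum _ _ _).symm
  rw [fderiv_layer_apply hσ, abs_mul, mul_assoc]
  exact mul_le_mul (hL _) hsum (abs_nonneg _) hL₀

end Layer

section Network

variable {κ ι : Type*} [Fintype κ] [Fintype ι]

/-- The maps `v ℓ`, `ℓ ≥ 1`, are the layer functions of the feedforward network with activation
`σ`, first-layer parameters `A₁, b₁` and parameters `A ℓ, b ℓ` in layer `ℓ ≥ 2`. The values of `v`
at `0` and of `A`, `b` at `0` and `1` carry no meaning. -/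
structure IsFeedforwardNetwork (σ : ℝ → ℝ) (A₁ : ι → κ → ℝ) (b₁ : ι → ℝ)
    (A : ℕ → ι → ι → ℝ) (b : ℕ → ι → ℝ) (v : ℕ → (κ → ℝ) → ι → ℝ) : Prop where
  one : v 1 = layer σ A₁ b₁
  succ : ∀ ℓ, 1 ≤ ℓ → v (ℓ + 1) = layer σ (A (ℓ + 1)) (b (ℓ + 1)) ∘ v ℓ

variable {σ : ℝ → ℝ} {A₁ : ι → κ → ℝ} {b₁ : ι → ℝ} {A : ℕ → ι → ι → ℝ} {b : ℕ → ι → ℝ}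
  {v : ℕ → (κ → ℝ) → ι → ℝ}

theorem IsFeedforwardNetwork.differentiable (hv : IsFeedforwardNetwork σ A₁ b₁ A b v)
    (hσ : Differentiable ℝ σ) {ℓ : ℕ} (hℓ : 1 ≤ ℓ) : Differentiable ℝ (v ℓ) := by
  induction ℓ, hℓ using Nat.le_induction with
  | base => exact hv.one ▸ differentiable_layer hσ A₁ b₁
  | succ ℓ hℓ ih => exact hv.succ ℓ hℓ ▸ (differentiable_layer hσ _ _).comp ih

theorem IsFeedforwardNetwork.fderiv_succ (hv : IsFeedforwardNetwork σ A₁ b₁ A b v)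
    (hσ : Differentiable ℝ σ) {ℓ : ℕ} (hℓ : 1 ≤ ℓ) (x u : κ → ℝ) :
    fderiv ℝ (v (ℓ + 1)) x u =
      fderiv ℝ (layer σ (A (ℓ + 1)) (b (ℓ + 1))) (v ℓ x) (fderiv ℝ (v ℓ) x u) := by
  rw [hv.succ ℓ hℓ, fderiv_comp x (differentiable_layer hσ _ _ _) (hv.differentiable hσ hℓ x),
    ContinuousLinearMap.comp_apply]

theorem tanh_network_first_deriv_bound_general {L R : ℝ}
    (hv : IsFeedforwardNetwork σ A₁ b₁ A b v) (hσ : Differentiable ℝ σ)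
    (hL : ∀ t, |deriv σ t| ≤ L) (hR : 0 ≤ R) (hA₁ : ∀ i j, |A₁ i j| ≤ R)
    (hA : ∀ ℓ i j, |A ℓ i j| ≤ R) {ℓ : ℕ} (hℓ : 1 ≤ ℓ) (i : ι) (x u : κ → ℝ) :
    |fderiv ℝ (fun y => v ℓ y i) x u| ≤
      (L * R) ^ ℓ * (Fintype.card ι : ℝ) ^ (ℓ - 1) * ∑ j, |u j| := by
  rw [fderiv_apply (hv.differentiable hσ hℓ x) i, ContinuousLinearMap.comp_apply,
    ContinuousLinearMap.proj_apply]
  induction ℓ, hℓ using Nat.le_induction generalizing i with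
  | base => simpa [hv.one] using abs_fderiv_layer_apply_le hσ hL hA₁ b₁ x u i
  | succ ℓ hℓ ih =>
    have hLR : 0 ≤ L * R := mul_nonneg ((abs_nonneg _).trans (hL 0)) hR
    rw [hv.fderiv_succ hσ hℓ]
    calc |fderiv ℝ (layer σ (A (ℓ + 1)) (b (ℓ + 1))) (v ℓ x) (fderiv ℝ (v ℓ) x u) i|
      _ ≤ L * R * ∑ j, |fderiv ℝ (v ℓ) x u j| :=
        abs_fderiv_layer_apply_le hσ hL (hA _) _ _ _ i
      _ ≤ L * R * ∑ _j : ι, (L * R) ^ ℓ * (Fintype.card ι : ℝ) ^ (ℓ - 1) * ∑ j, |u j| := by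
        gcongr with j
        exact ih j
      _ = (L * R) ^ (ℓ + 1) * (Fintype.card ι : ℝ) ^ (ℓ + 1 - 1) * ∑ j, |u j| := by
        obtain ⟨n, rfl⟩ := Nat.exists_eq_add_of_le' hℓ
        simp only [Finset.sum_const, Finset.card_univ, nsmul_eq_mul, Nat.add_sub_cancel]
        ring

end Network

theorem tanh_network_first_deriv_bound (d W : ℕ) (hW : 1 ≤ W) (R : ℝ) (hR : 0 ≤ R)
    (A1 : Fin W → Fin d → ℝ) (b1 : Fin W → ℝ)
    (A : ℕ → Fin W → Fin W → ℝ) (b : ℕ → Fin W → ℝ)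
    (hA1 : ∀ i j, |A1 i j| ≤ R) (hA : ∀ ℓ i j, |A ℓ i j| ≤ R)
    (v : ℕ → (Fin d → ℝ) → Fin W → ℝ)
    (hv1 : ∀ (i : Fin W) (x : Fin d → ℝ),
      v 1 x i = Real.tanh (∑ j, A1 i j * x j + b1 i))
    (hv : ∀ ℓ : ℕ, 2 ≤ ℓ → ∀ (i : Fin W) (x : Fin d → ℝ),
      v ℓ x i = Real.tanh (∑ j, A ℓ i j * v (ℓ - 1) x j + b ℓ i)) :
    ∀ ℓ : ℕ, 1 ≤ ℓ → ∀ (i : Fin W) (k : Fin d) (x : Fin d → ℝ),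
      |pd (fun y => v ℓ y i) k x| ≤ R ^ ℓ * (W : ℝ) ^ (ℓ - 1) := by
  intro ℓ hℓ i k x
  have hnet : IsFeedforwardNetwork Real.tanh A1 b1 A b v :=
    { one := funext₂ fun x i => hv1 i x
      succ := fun n hn => funext₂ fun x i => hv (n + 1) (Nat.succ_le_succ hn) i x }
  have hsingle : ∑ j, |(Pi.single k 1 : Fin d → ℝ) j| = 1 := by
    simp [Pi.single_apply, apply_ite abs]
  simpa [pd, hsingle] using tanh_network_first_deriv_bound_general hnet differentiable_tanh
    abs_deriv_tanh_le_one hR hA1 hA hℓ i x (Pi.single k 1)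
end
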